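/- arXiv:1707.04072 — 5 statements merged into one kernel-verified Lean document; each statement's English description precedes it below -/
import Mathlib

section
/- Let n ≥ 2 and let η ∈ Γ₂ ⊂ ℝⁿ with η₁ ≥ η₂ ≥ ⋯ ≥ η_n. Then η₁·σ₁(η|1) ≥ (2/n)·σ₂(η). -/
open Finset

/-- The `k`-th elementary symmetric polynomial of `η : Fin n → ℝ`. -/
noncomputable def sigmaE (n k : ℕ) (η : Fin n → ℝ) : ℝ :=
  ∑ s ∈ Finset.univ.powersetCard k, ∏ i ∈ s, η i

/-- `σ₁(η|i) = ∑_{j ≠ i} η j`. -/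
noncomputable def sigma1rest (n : ℕ) (η : Fin n → ℝ) (i : Fin n) : ℝ :=
  ∑ j ∈ Finset.univ.erase i, η j

/-- The Gårding cone `Γ₂`. -/
def Gamma2 (n : ℕ) (η : Fin n → ℝ) : Prop :=
  0 < sigmaE n 1 η ∧ 0 < sigmaE n 2 η

/-!
Split the entries into one entry `a`, at least the mean of all of them, and the multiset `s` of the
others, so that `σ₂(a, s) = a σ₁(s) + σ₂(s)`. Cauchy–Schwarz gives
`2 |s| σ₂(s) ≤ (|s| - 1) σ₁(s)²`, and one factor `σ₁(s)` of the square is at most `|s| a` by the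
choice of `a`; hence `2 σ₂(a, s) ≤ (|s| + 1) a σ₁(s)`. Estimating only one factor needs
`σ₁(s) ≥ 0`, and this is where the cone enters: `σ₁(a, s)² = a² + ∑ x ∈ s, x² + 2 σ₂(a, s) ≥ a²`
together with `σ₁(a, s) ≥ 0` forces `a ≤ σ₁(a, s)`.
-/

section CommSemiring

variable {R : Type*} [CommSemiring R]

theorem esymm_one_eq_sum (s : Multiset R) : s.esymm 1 = s.sum := by
  simp [Multiset.esymm, Multiset.powersetCard_one]

theorem esymm_zero_succ (k : ℕ) : (0 : Multiset R).esymm (k + 1) = 0 := by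
  simp [Multiset.esymm, Multiset.powersetCard_zero_right]

theorem esymm_succ_cons (a : R) (s : Multiset R) (k : ℕ) :
    (a ::ₘ s).esymm (k + 1) = s.esymm (k + 1) + a * s.esymm k := by
  simp [Multiset.esymm, Multiset.sum_map_mul_left]

theorem esymm_two_cons (a : R) (s : Multiset R) :
    (a ::ₘ s).esymm 2 = s.esymm 2 + a * s.sum := by
  rw [esymm_succ_cons, esymm_one_eq_sum]

theorem sq_sum_eq_sum_sq_add_two_mul_esymm_two (s : Multiset R) :
    s.sum ^ 2 = (s.map (· ^ 2)).sum + 2 * s.esymm 2 := by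
  induction s using Multiset.induction_on with
  | empty => simp [esymm_zero_succ]
  | cons a s ih =>
    rw [Multiset.sum_cons, Multiset.map_cons, Multiset.sum_cons, esymm_two_cons, add_sq, ih]
    ring

end CommSemiring

section OrderedRing

variable {R : Type*} [CommRing R] [LinearOrder R] [IsStrictOrderedRing R] {a : R} {s : Multiset R}

theorem sq_multiset_sum_le_card_mul_sum_sq (s : Multiset R) :
    s.sum ^ 2 ≤ s.card * (s.map (· ^ 2)).sum := by
  classical
  have h := sq_sum_le_card_mul_sum_sq (s := univ) (f := fun x : s ↦ (x : R))
  rwa [card_univ, Multiset.card_coe, ← Multiset.sum_eq_sum_coe, Finset.sum,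
    Multiset.map_univ s (· ^ 2)] at h

theorem card_mul_two_mul_esymm_two_le (s : Multiset R) :
    s.card * (2 * s.esymm 2) ≤ (s.card - 1) * s.sum ^ 2 := by
  have newton := sq_sum_eq_sum_sq_add_two_mul_esymm_two s
  have cauchy_schwarz := sq_multiset_sum_le_card_mul_sum_sq s
  linear_combination cauchy_schwarz - s.card * newton

theorem sum_nonneg_of_cons_sum_nonneg_of_cons_esymm_two_nonneg
    (h₁ : 0 ≤ (a ::ₘ s).sum) (h₂ : 0 ≤ (a ::ₘ s).esymm 2) : 0 ≤ s.sum := by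
  have sum_sq_nonneg : 0 ≤ (s.map (· ^ 2)).sum :=
    Multiset.sum_nonneg (Multiset.forall_mem_map_iff.2 fun x _ ↦ sq_nonneg x)
  have sq_le : a ^ 2 ≤ (a ::ₘ s).sum ^ 2 := by
    rw [sq_sum_eq_sum_sq_add_two_mul_esymm_two, Multiset.map_cons, Multiset.sum_cons]
    linarith
  have le_sum : a ≤ (a ::ₘ s).sum := le_of_abs_le (abs_le_of_sq_le_sq sq_le h₁)
  rwa [Multiset.sum_cons, le_add_iff_nonneg_right] at le_sum

theorem two_mul_esymm_two_le (h₀ : 0 ≤ s.sum) (ha : s.sum ≤ s.card * a) :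
    2 * s.esymm 2 ≤ (s.card - 1) * (a * s.sum) := by
  rcases s.empty_or_exists_mem with rfl | ⟨x, hx⟩
  · simp [esymm_zero_succ]
  have card_pos : 0 < s.card := Multiset.card_pos_iff_exists_mem.2 ⟨x, hx⟩
  have one_le_card : (1 : R) ≤ s.card := by exact_mod_cast card_pos
  refine le_of_mul_le_mul_left ?_ (zero_lt_one.trans_le one_le_card)
  calc s.card * (2 * s.esymm 2)
      ≤ (s.card - 1) * s.sum ^ 2 := card_mul_two_mul_esymm_two_le s
    _ = (s.card - 1) * (s.sum * s.sum) := by rw [sq]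
    _ ≤ (s.card - 1) * (s.card * a * s.sum) := by
      have := sub_nonneg.2 one_le_card
      gcongr
    _ = s.card * ((s.card - 1) * (a * s.sum)) := by ring

theorem two_mul_esymm_two_cons_le (h₀ : 0 ≤ s.sum) (ha : s.sum ≤ s.card * a) :
    2 * (a ::ₘ s).esymm 2 ≤ (a ::ₘ s).card * (a * s.sum) := by
  rw [esymm_two_cons, Multiset.card_cons, Nat.cast_succ]
  linear_combination two_mul_esymm_two_le h₀ ha

end OrderedRing

theorem stmt1_general {ι K : Type*} [DecidableEq ι] [Field K] [LinearOrder K]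
    [IsStrictOrderedRing K] {s : Finset ι} {f : ι → K} {i : ι} (hi : i ∈ s)
    (h₁ : 0 ≤ ∑ t ∈ s.powersetCard 1, ∏ j ∈ t, f j)
    (h₂ : 0 ≤ ∑ t ∈ s.powersetCard 2, ∏ j ∈ t, f j)
    (hmean : ∑ j ∈ s, f j ≤ #s * f i) :
    2 / #s * ∑ t ∈ s.powersetCard 2, ∏ j ∈ t, f j ≤ f i * ∑ j ∈ s.erase i, f j := by
  set r := (s.erase i).val.map f with hr
  have map_eq : s.val.map f = f i ::ₘ r := by
    rw [hr, ← Multiset.map_cons, ← insert_val_of_notMem (notMem_erase i s), insert_erase hi]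
  have card_eq : #s = (f i ::ₘ r).card := by rw [← map_eq, Multiset.card_map, card_def]
  rw [← esymm_map_val, map_eq] at h₁ h₂
  rw [esymm_one_eq_sum] at h₁
  rw [Finset.sum, map_eq, card_eq, Multiset.sum_cons, Multiset.card_cons, Nat.cast_succ] at hmean
  have sum_rest_nonneg := sum_nonneg_of_cons_sum_nonneg_of_cons_esymm_two_nonneg h₁ h₂
  have card_pos : (0 : K) < #s := by exact_mod_cast card_pos.2 ⟨i, hi⟩
  rw [div_mul_eq_mul_div, div_le_iff₀' card_pos, ← esymm_map_val, map_eq, card_eq]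
  exact two_mul_esymm_two_cons_le sum_rest_nonneg (by linarith)

theorem stmt1 (n : ℕ) (hn : 2 ≤ n) (η : Fin n → ℝ) (hη : Gamma2 n η)
    (hsort : ∀ i j : Fin n, i ≤ j → η j ≤ η i) :
    η ⟨0, by omega⟩ * sigma1rest n η ⟨0, by omega⟩ ≥ (2 / (n : ℝ)) * sigmaE n 2 η := by
  have hmean := sum_le_card_nsmul univ η _ fun j _ ↦ hsort ⟨0, by omega⟩ j (Nat.zero_le _)
  simpa [sigmaE, sigma1rest] using
    stmt1_general (mem_univ _) hη.1.le hη.2.le (hmean.trans_eq (nsmul_eq_mul _ _))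
end

section
/- Let n ≥ 2. There exists a constant c = c(n) > 0 such that for every η ∈ Γ₂ ⊂ ℝⁿ with η₁ ≥ η₂ ≥ ⋯ ≥ η_n and every index i with 2 ≤ i ≤ n, one has σ₁(η|i) ≥ c · ∑_{k=1}^{n} σ₁(η|k). (Equivalently, with G^{iī} = σ₁(η|i)/σ₂(η), G^{iī} ≥ c ∑_k G^{kk̄} for i ≥ 2.) -/
open Finset

/-!
On `Γ₂` the identity `σ₁² = ∑ ηⱼ² + 2σ₂` gives `ηᵢ² + ηⱼ² ≤ σ₁²` for `i ≠ j`. If `ηᵢ ≤ ηⱼ`, then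
`ηᵢ ≤ σ₁ / √2 ≤ (3/4) σ₁`, so `σ₁(η|i) = σ₁ - ηᵢ` is at least a quarter of `σ₁`, while
`∑ₖ σ₁(η|k) = (n - 1) σ₁`.
-/

section ElementarySymmetric

variable {ι R : Type*} [Fintype ι]

theorem sum_sq_add_two_mul_sum_powersetCard_two [CommRing R] (η : ι → R) :
    ∑ i, η i ^ 2 + 2 * ∑ s ∈ univ.powersetCard 2, ∏ i ∈ s, η i = (∑ i, η i) ^ 2 := by
  have indices : {a ∈ antidiagonal 2 | a.1 < 2} = {(0, 2), (1, 1)} := by decide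
  have newton := MvPolynomial.mul_esymm_eq_sum ι R 2
  rw [indices, sum_pair (by decide), MvPolynomial.esymm_zero, MvPolynomial.esymm_one] at newton
  have evaluated := congrArg (MvPolynomial.aeval η) newton
  simp only [MvPolynomial.esymm, MvPolynomial.psum, MvPolynomial.aeval_X, map_mul, map_add, map_sum,
    map_prod, map_pow, map_neg, map_one, pow_one, Nat.cast_ofNat, map_ofNat] at evaluated
  linear_combination evaluated

theorem sum_sum_erase_univ [Ring R] [DecidableEq ι] (η : ι → R) :
    ∑ k, ∑ j ∈ univ.erase k, η j = (Fintype.card ι - 1) * ∑ j, η j := by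
  simp only [sum_erase_eq_sub (mem_univ _), sum_sub_distrib, sum_const, card_univ, nsmul_eq_mul,
    sub_mul, one_mul]

variable [CommRing R] [LinearOrder R] [IsStrictOrderedRing R] {η : ι → R} {i j : ι}

theorem sq_add_sq_le_sq_sum (h₂ : 0 ≤ ∑ s ∈ univ.powersetCard 2, ∏ k ∈ s, η k) (hij : i ≠ j) :
    η i ^ 2 + η j ^ 2 ≤ (∑ k, η k) ^ 2 := by
  classical
  calc η i ^ 2 + η j ^ 2 = ∑ k ∈ {i, j}, η k ^ 2 := (sum_pair (f := (η · ^ 2)) hij).symm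
    _ ≤ ∑ k, η k ^ 2 :=
      sum_le_sum_of_subset_of_nonneg (subset_univ _) fun k _ _ ↦ sq_nonneg (η k)
    _ ≤ (∑ k, η k) ^ 2 := by linarith [sum_sq_add_two_mul_sum_powersetCard_two η]

theorem four_mul_le_three_mul_sum (h₁ : 0 ≤ ∑ k, η k)
    (h₂ : 0 ≤ ∑ s ∈ univ.powersetCard 2, ∏ k ∈ s, η k) (hij : i ≠ j) (hle : η i ≤ η j) :
    4 * η i ≤ 3 * ∑ k, η k := by
  obtain hi | hi := le_total (η i) 0
  · linarith
  have hsq : η i ^ 2 ≤ η j ^ 2 := pow_le_pow_left₀ hi hle 2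
  refine le_of_sq_le_sq ?_ (by positivity)
  calc (4 * η i) ^ 2 ≤ 8 * (η i ^ 2 + η j ^ 2) := by linarith
    _ ≤ 8 * (∑ k, η k) ^ 2 := by gcongr; exact sq_add_sq_le_sq_sum h₂ hij
    _ ≤ (3 * ∑ k, η k) ^ 2 := by linarith [sq_nonneg (∑ k, η k)]

theorem stmt2_general [DecidableEq ι] (h₁ : 0 ≤ ∑ k, η k)
    (h₂ : 0 ≤ ∑ s ∈ univ.powersetCard 2, ∏ k ∈ s, η k) (hij : i ≠ j) (hle : η i ≤ η j) :
    ∑ k, ∑ l ∈ univ.erase k, η l ≤ 4 * (Fintype.card ι - 1) * ∑ l ∈ univ.erase i, η l := by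
  have hcard : (0 : R) ≤ Fintype.card ι - 1 :=
    sub_nonneg.2 (Nat.one_le_cast.2 (Fintype.card_pos_iff.2 ⟨i⟩))
  have hquarter : ∑ k, η k ≤ 4 * ∑ l ∈ univ.erase i, η l := by
    rw [sum_erase_eq_sub (mem_univ i)]
    linarith [four_mul_le_three_mul_sum h₁ h₂ hij hle]
  calc ∑ k, ∑ l ∈ univ.erase k, η l = (Fintype.card ι - 1) * ∑ k, η k := sum_sum_erase_univ η
    _ ≤ (Fintype.card ι - 1) * (4 * ∑ l ∈ univ.erase i, η l) := by gcongr
    _ = 4 * (Fintype.card ι - 1) * ∑ l ∈ univ.erase i, η l := by ring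

end ElementarySymmetric

theorem sigmaE_one {n : ℕ} (η : Fin n → ℝ) : sigmaE n 1 η = ∑ i, η i := by
  simp [sigmaE, powersetCard_one]

theorem stmt2 (n : ℕ) (hn : 2 ≤ n) :
    ∃ c : ℝ, 0 < c ∧
      ∀ η : Fin n → ℝ, Gamma2 n η → (∀ i j : Fin n, i ≤ j → η j ≤ η i) →
        ∀ i : Fin n, 1 ≤ (i : ℕ) →
          sigma1rest n η i ≥ c * ∑ k, sigma1rest n η k := by
  have hpos : (0 : ℝ) < 4 * (n - 1) :=
    mul_pos four_pos (sub_pos.2 (Nat.one_lt_cast.2 hn))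
  refine ⟨(4 * (n - 1))⁻¹, inv_pos.2 hpos, fun η ⟨h₁, h₂⟩ hη i hi ↦ (inv_mul_le_iff₀ hpos).2 ?_⟩
  let first : Fin n := ⟨0, by lia⟩
  have hne : i ≠ first := Fin.ne_of_val_ne (Nat.ne_of_gt hi)
  simpa only [Fintype.card_fin, sigma1rest] using
    stmt2_general (sigmaE_one η ▸ h₁.le) h₂.le hne (hη first i (Nat.zero_le _))
end

section
/- Let n ≥ 2 and let η ∈ ℝⁿ with σ₂(η) ≠ 0 (in particular this holds for η ∈ Γ₂). Define the n×n real symmetric matrix A(η) by A_{ij} = σ₂(η)^{−2}·σ₁(η|i)·σ₁(η|j) − (1−δ_{ij})·σ₂(η)^{−1}. Then det A(η) = (n−1)·σ₂(η)^{−n}. -/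
open Finset

/-!
Up to the factor `σ₂²`, the matrix is `σ₂ I + v vᵀ - σ₂ 𝟙 𝟙ᵀ` with `v i = σ₁(η|i)`: a scalar matrix
plus one of rank at most two. Since the nonzero parts of the spectra of `U V` and `V U` agree,
its determinant is `σ₂ ^ (n - 2)` times a `2 × 2` determinant involving only `v ⬝ v`,
`v ⬝ 𝟙` and `n`. These inner products are polynomials in `σ₁` and `σ₂`, and the terms containing
`σ₁` cancel.
-/

open scoped Matrix

section RankTwo

variable {ι R : Type*} [Fintype ι] [DecidableEq ι] [CommRing R]

theorem det_scalar_sub_mul_comm_of_le {κ : Type*} [Fintype κ] [DecidableEq κ]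
    (A : Matrix ι κ R) (B : Matrix κ ι R) (h : Fintype.card κ ≤ Fintype.card ι) (c : R) :
    (Matrix.scalar ι c - A * B).det =
      c ^ (Fintype.card ι - Fintype.card κ) * (Matrix.scalar κ c - B * A).det := by
  simpa only [Matrix.eval_charpoly, Polynomial.eval_mul, Polynomial.eval_pow, Polynomial.eval_X]
    using congrArg (Polynomial.eval c) (Matrix.charpoly_mul_comm_of_le A B h)

theorem det_scalar_sub_vecMulVec_add_vecMulVec (h : 2 ≤ Fintype.card ι) (c : R)
    (u v x y : ι → R) :
    (Matrix.scalar ι c - (Matrix.vecMulVec u v + Matrix.vecMulVec x y)).det =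
      c ^ (Fintype.card ι - 2) * ((c - v ⬝ᵥ u) * (c - y ⬝ᵥ x) - (v ⬝ᵥ x) * (y ⬝ᵥ u)) := by
  have hfactor : Matrix.vecMulVec u v + Matrix.vecMulVec x y =
      (Matrix.of ![u, x])ᵀ * Matrix.of ![v, y] := by
    ext i j
    simp [Matrix.mul_apply, Matrix.vecMulVec_apply]
  have hgram : Matrix.of ![v, y] * (Matrix.of ![u, x])ᵀ =
      !![v ⬝ᵥ u, v ⬝ᵥ x; y ⬝ᵥ u, y ⬝ᵥ x] := by
    ext i j
    fin_cases i <;> fin_cases j <;> rfl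
  rw [hfactor, det_scalar_sub_mul_comm_of_le _ _ (by rwa [Fintype.card_fin]), hgram,
    Matrix.det_fin_two, Fintype.card_fin]
  simp

theorem det_mul_sub_offDiag (h : 2 ≤ Fintype.card ι) (v : ι → R) (s : R) :
    (Matrix.of fun i j : ι => v i * v j - (if i = j then 0 else s)).det =
      s ^ (Fintype.card ι - 2) *
        ((s + ∑ i, v i ^ 2) * (s - Fintype.card ι * s) + s * (∑ i, v i) ^ 2) := by
  have hrank : (Matrix.of fun i j : ι => v i * v j - (if i = j then 0 else s)) =
      Matrix.scalar ι s - (Matrix.vecMulVec (-v) v + Matrix.vecMulVec 1 fun _ => s) := by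
    ext i j
    by_cases hij : i = j
    · simp [Matrix.vecMulVec_apply, hij]
    · simp [Matrix.vecMulVec_apply, hij, sub_eq_neg_add]
  rw [hrank, det_scalar_sub_vecMulVec_add_vecMulVec h]
  simp only [dotProduct, Pi.neg_apply, Pi.one_apply, mul_neg, mul_one, sum_neg_distrib, sum_const,
    card_univ, nsmul_eq_mul, ← mul_sum, ← sq]
  ring

end RankTwo

section ElementarySymmetric

theorem le_card_of_esymm_ne_zero {R : Type*} [CommSemiring R] {s : Multiset R} {k : ℕ}
    (h : s.esymm k ≠ 0) : k ≤ s.card := by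
  contrapose! h
  simp [Multiset.esymm, Multiset.powersetCard_eq_empty k h]

variable {ι R : Type*} [Fintype ι] [CommRing R]

theorem sum_sq_add_two_mul_esymm_two (η : ι → R) :
    ∑ i, η i ^ 2 + 2 * (univ.val.map η).esymm 2 = (∑ i, η i) ^ 2 := by
  have hnewton := congrArg (MvPolynomial.aeval η) (MvPolynomial.mul_esymm_eq_sum ι R 2)
  have hpairs : {a ∈ antidiagonal 2 | a.1 < 2} = {((0 : ℕ), (2 : ℕ)), (1, 1)} := by decide
  rw [hpairs, sum_pair (by decide)] at hnewton
  simp only [map_mul, map_add, map_pow, map_neg, map_one, map_ofNat, map_sum,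
    MvPolynomial.psum, MvPolynomial.esymm_zero, MvPolynomial.esymm_one, MvPolynomial.aeval_X,
    MvPolynomial.aeval_esymm_eq_multiset_esymm, pow_one, Nat.cast_ofNat] at hnewton
  linear_combination hnewton

variable [DecidableEq ι]

theorem sum_sum_erase (η : ι → R) :
    ∑ i, ∑ j ∈ univ.erase i, η j = (Fintype.card ι - 1) * ∑ i, η i := by
  simp only [sum_erase_eq_sub (mem_univ _), sum_sub_distrib, sum_const, card_univ, nsmul_eq_mul]
  ring

theorem sum_sq_sum_erase (η : ι → R) :
    ∑ i, (∑ j ∈ univ.erase i, η j) ^ 2 =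
      (Fintype.card ι - 1) * (∑ i, η i) ^ 2 - 2 * (univ.val.map η).esymm 2 := by
  simp only [sum_erase_eq_sub (mem_univ _), sub_sq, sum_add_distrib, sum_sub_distrib, sum_const,
    card_univ, nsmul_eq_mul, ← mul_sum]
  linear_combination sum_sq_add_two_mul_esymm_two η

theorem det_sum_erase_mul_sub_offDiag_esymm_two (h : 2 ≤ Fintype.card ι) (η : ι → R) :
    (Matrix.of fun i j : ι =>
        (∑ k ∈ univ.erase i, η k) * (∑ k ∈ univ.erase j, η k) -
          (if i = j then 0 else (univ.val.map η).esymm 2)).det =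
      (Fintype.card ι - 1) * (univ.val.map η).esymm 2 ^ Fintype.card ι := by
  rw [det_mul_sub_offDiag h, sum_sq_sum_erase, sum_sum_erase,
    ← pow_sub_mul_pow ((univ.val.map η).esymm 2) h]
  ring

end ElementarySymmetric

theorem stmt5_general {ι K : Type*} [Fintype ι] [DecidableEq ι] [Field K] (η : ι → K)
    (hη : (univ.val.map η).esymm 2 ≠ 0) :
    (Matrix.of fun i j : ι =>
        ((univ.val.map η).esymm 2)⁻¹ ^ 2 *
            ((∑ k ∈ univ.erase i, η k) * ∑ k ∈ univ.erase j, η k) -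
          (if i = j then 0 else ((univ.val.map η).esymm 2)⁻¹)).det =
      ((Fintype.card ι : K) - 1) * (univ.val.map η).esymm 2 ^ (-(Fintype.card ι : ℤ)) := by
  have hcard : 2 ≤ Fintype.card ι := by simpa using le_card_of_esymm_ne_zero hη
  have hdet := det_sum_erase_mul_sub_offDiag_esymm_two hcard η
  set s := (univ.val.map η).esymm 2
  set v : ι → K := fun i => ∑ k ∈ univ.erase i, η k
  have hscale : (Matrix.of fun i j : ι => s⁻¹ ^ 2 * (v i * v j) - (if i = j then 0 else s⁻¹)) =
      s⁻¹ ^ 2 • Matrix.of fun i j : ι => v i * v j - (if i = j then 0 else s) := by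
    ext i j
    have hs : s⁻¹ ^ 2 * s = s⁻¹ := by field_simp
    simp only [Matrix.of_apply, Matrix.smul_apply, smul_eq_mul, mul_sub, mul_ite, mul_zero, hs]
  rw [hscale, Matrix.det_smul, hdet, pow_right_comm, zpow_neg, zpow_natCast, inv_pow]
  field_simp

theorem stmt5 (n : ℕ) (hn : 2 ≤ n) (η : Fin n → ℝ) (hη : sigmaE n 2 η ≠ 0) :
    (Matrix.of fun i j : Fin n =>
        (sigmaE n 2 η)⁻¹ ^ 2 * (sigma1rest n η i * sigma1rest n η j) -
          (if i = j then 0 else (sigmaE n 2 η)⁻¹)).det =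
      ((n : ℝ) - 1) * (sigmaE n 2 η) ^ (-(n : ℤ)) := by
  simpa only [sigmaE, sigma1rest, esymm_map_val, Fintype.card_fin] using
    stmt5_general η (by rwa [esymm_map_val])
end

section
/- Let n ≥ 2 and let η ∈ Γ₂ ⊂ ℝⁿ. Define the n×n real symmetric matrix A(η) by A_{ij} = σ₂(η)^{−2}·σ₁(η|i)·σ₁(η|j) − (1−δ_{ij})·σ₂(η)^{−1}. Then A(η) is positive definite; in particular its smallest eigenvalue is strictly positive. (This expresses the concavity of log σ₂ on Γ₂ in the diagonal directions, together with det A(η) = (n−1)σ₂(η)^{−n} > 0.) -/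
open Finset

/-!
Polarizing `2σ₂` gives the form `B(x, y) = ∑_{i ≠ j} xᵢ yⱼ = (∑ xᵢ)(∑ yᵢ) - x ⬝ y`. If
`B(η, η) > 0`, that is `|η|² < (∑ ηᵢ)²`, then by Cauchy–Schwarz `B` is negative definite on the
`B`-orthogonal complement of `η`; projecting `x` onto it yields the reversed Cauchy–Schwarz
inequality `B(η, η) B(x, x) ≤ B(η, x)²`. Since `∂σ₂/∂ηᵢ = σ₁(η|i)`, the quadratic form of `A(η)` is
`σ₂⁻² (B(η, x)² - σ₂ B(x, x))`, and `σ₂ = B(η, η) / 2` leaves a factor `2` of room for strictness.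
-/

open Matrix

section CommRing

variable {ι R : Type*} [Fintype ι] [CommRing R]

/-- The symmetric bilinear form `∑_{i ≠ j} x i * y j` polarizing twice the second elementary
symmetric polynomial, written as the product of the coordinate sums minus the diagonal terms. -/
def offDiagForm (x y : ι → R) : R :=
  (∑ i, x i) * (∑ i, y i) - x ⬝ᵥ y

theorem two_mul_esymm_two (x : ι → R) :
    2 * (univ.val.map x).esymm 2 = offDiagForm x x := by
  have newton : 2 * MvPolynomial.esymm ι R 2 =
      MvPolynomial.psum ι R 1 ^ 2 - MvPolynomial.psum ι R 2 := by
    have indices : {a ∈ antidiagonal 2 | a.1 < 2} = {(0, 2), (1, 1)} := by decide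
    have identity := MvPolynomial.mul_esymm_eq_sum ι R 2
    rw [indices, sum_pair (by decide), MvPolynomial.esymm_zero, MvPolynomial.esymm_one,
      ← MvPolynomial.psum_one] at identity
    linear_combination identity
  have evaluated := congrArg (MvPolynomial.aeval x) newton
  rw [map_mul, MvPolynomial.aeval_esymm_eq_multiset_esymm] at evaluated
  simpa [MvPolynomial.psum, offDiagForm, dotProduct, ← sq] using evaluated

theorem sum_erase_dotProduct [DecidableEq ι] (x y : ι → R) :
    (fun i ↦ ∑ j ∈ univ.erase i, x j) ⬝ᵥ y = offDiagForm x y := by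
  simp only [dotProduct, offDiagForm, sum_erase_eq_sub (mem_univ _), sub_mul, sum_sub_distrib,
    mul_sum]

theorem dotProduct_mulVec_rank_one_sub_off_diag [DecidableEq ι] (a c : R) (r x : ι → R) :
    x ⬝ᵥ (Matrix.of fun i j ↦ a * (r i * r j) - if i = j then 0 else c) *ᵥ x =
      a * (r ⬝ᵥ x) ^ 2 - c * offDiagForm x x := by
  have decomposition : (Matrix.of fun i j ↦ a * (r i * r j) - if i = j then 0 else c) =
      a • vecMulVec r r - c • (vecMulVec 1 1 - 1) := by
    ext i j
    by_cases h : i = j <;> simp [vecMulVec_apply, one_apply, h]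
  rw [decomposition]
  simp only [sub_mulVec, smul_mulVec, vecMulVec_mulVec, one_mulVec, dotProduct_sub,
    dotProduct_smul, one_dotProduct, dotProduct_one, smul_eq_mul, MulOpposite.smul_eq_mul_unop,
    MulOpposite.unop_op, dotProduct_comm x r, offDiagForm]
  ring

theorem offDiagForm_self_smul_sub_smul (a b : R) (x y : ι → R) :
    offDiagForm (a • x - b • y) (a • x - b • y) =
      a ^ 2 * offDiagForm x x - 2 * (a * b) * offDiagForm y x + b ^ 2 * offDiagForm y y := by
  simp only [offDiagForm, sub_dotProduct, dotProduct_sub, smul_dotProduct, dotProduct_smul,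
    smul_eq_mul, Pi.sub_apply, Pi.smul_apply, sum_sub_distrib, ← mul_sum, dotProduct_comm x y]
  ring

theorem offDiagForm_right_smul_sub_smul (a b : R) (x y z : ι → R) :
    offDiagForm x (a • y - b • z) = a * offDiagForm x y - b * offDiagForm x z := by
  simp only [offDiagForm, dotProduct_sub, dotProduct_smul, smul_eq_mul, Pi.sub_apply,
    Pi.smul_apply, sum_sub_distrib, ← mul_sum]
  ring

end CommRing

section LinearOrderedCommRing

variable {ι R : Type*} [Fintype ι] [CommRing R] [LinearOrder R] [IsStrictOrderedRing R]

theorem offDiagForm_self_neg_of_orthogonal {η x : ι → R} (hη : 0 < offDiagForm η η)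
    (hηx : offDiagForm η x = 0) (hx : x ≠ 0) : offDiagForm x x < 0 := by
  have hxx : 0 < x ⬝ᵥ x :=
    (sum_nonneg fun i _ ↦ mul_self_nonneg (x i)).lt_of_ne' (dotProduct_self_eq_zero.not.mpr hx)
  have cauchy_schwarz : (η ⬝ᵥ x) ^ 2 ≤ (η ⬝ᵥ η) * (x ⬝ᵥ x) := by
    simpa only [dotProduct, sq] using sum_mul_sq_le_sq_mul_sq univ η x
  simp only [offDiagForm, ← sq] at hη hηx ⊢
  refine sub_neg.mpr (lt_of_mul_lt_mul_left ?_ (sq_nonneg (∑ i, η i)))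
  calc (∑ i, η i) ^ 2 * (∑ i, x i) ^ 2 = (η ⬝ᵥ x) ^ 2 := by
        rw [← mul_pow, sub_eq_zero.mp hηx]
    _ ≤ (η ⬝ᵥ η) * (x ⬝ᵥ x) := cauchy_schwarz
    _ < (∑ i, η i) ^ 2 * (x ⬝ᵥ x) := mul_lt_mul_of_pos_right (sub_pos.mp hη) hxx

theorem offDiagForm_mul_self_le_sq {η : ι → R} (hη : 0 < offDiagForm η η) (x : ι → R) :
    offDiagForm η η * offDiagForm x x ≤ offDiagForm η x ^ 2 := by
  set y := offDiagForm η η • x - offDiagForm η x • η with hy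
  have orthogonal : offDiagForm η y = 0 := by
    rw [hy, offDiagForm_right_smul_sub_smul]
    ring
  have nonpos : offDiagForm y y ≤ 0 := by
    rcases eq_or_ne y 0 with hy0 | hy0
    · simp [hy0, offDiagForm]
    · exact (offDiagForm_self_neg_of_orthogonal hη orthogonal hy0).le
  have expansion : offDiagForm y y =
      offDiagForm η η * (offDiagForm η η * offDiagForm x x - offDiagForm η x ^ 2) := by
    rw [hy, offDiagForm_self_smul_sub_smul]
    ring
  exact sub_nonpos.mp (nonpos_of_mul_nonpos_right (expansion ▸ nonpos) hη)

theorem offDiagForm_mul_self_lt_two_mul_sq {η x : ι → R} (hη : 0 < offDiagForm η η)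
    (hx : x ≠ 0) : offDiagForm η η * offDiagForm x x < 2 * offDiagForm η x ^ 2 := by
  rcases eq_or_ne (offDiagForm η x) 0 with hηx | hηx
  · simpa [hηx] using mul_neg_of_pos_of_neg hη (offDiagForm_self_neg_of_orthogonal hη hηx hx)
  · linarith [offDiagForm_mul_self_le_sq hη x, sq_pos_of_ne_zero hηx]

end LinearOrderedCommRing

theorem stmt9_general {ι K : Type*} [Fintype ι] [DecidableEq ι] [Field K] [LinearOrder K]
    [IsStrictOrderedRing K] [StarRing K] [TrivialStar K] (η : ι → K)
    (hη : 0 < (univ.val.map η).esymm 2) :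
    (Matrix.of fun i j ↦
        ((univ.val.map η).esymm 2)⁻¹ ^ 2 *
            ((∑ k ∈ univ.erase i, η k) * (∑ k ∈ univ.erase j, η k)) -
          (if i = j then 0 else ((univ.val.map η).esymm 2)⁻¹)).PosDef := by
  set σ₂ := (univ.val.map η).esymm 2
  have polar : 2 * σ₂ = offDiagForm η η := two_mul_esymm_two η
  refine .of_dotProduct_mulVec_pos ?_ fun x hx ↦ ?_
  · ext i j
    simp [mul_comm, eq_comm]
  · have key : σ₂ * offDiagForm x x < offDiagForm η x ^ 2 := by
      have reversed := offDiagForm_mul_self_lt_two_mul_sq (polar ▸ mul_pos two_pos hη) hx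
      rw [← polar] at reversed
      linarith
    rw [star_trivial, dotProduct_mulVec_rank_one_sub_off_diag, sum_erase_dotProduct]
    calc 0 < σ₂⁻¹ ^ 2 * (offDiagForm η x ^ 2 - σ₂ * offDiagForm x x) :=
          mul_pos (by positivity) (sub_pos.mpr key)
      _ = σ₂⁻¹ ^ 2 * offDiagForm η x ^ 2 - σ₂⁻¹ * offDiagForm x x := by
          field_simp

theorem stmt9 (n : ℕ) (hn : 2 ≤ n) (η : Fin n → ℝ) (hη : Gamma2 n η) :
    (Matrix.of fun i j : Fin n =>
        (sigmaE n 2 η)⁻¹ ^ 2 * (sigma1rest n η i * sigma1rest n η j) -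
          (if i = j then 0 else (sigmaE n 2 η)⁻¹)).PosDef := by
  have hσ₂ : sigmaE n 2 η = (univ.val.map η).esymm 2 := (esymm_map_val η univ 2).symm
  exact hσ₂ ▸ stmt9_general η (hσ₂ ▸ hη.2)
end

section
/- Let n ≥ 2 and let η ∈ Γ₂ ⊂ ℝⁿ. Define the n×n real symmetric matrix A(η) by A_{ij} = σ₂(η)^{−2}·σ₁(η|i)·σ₁(η|j) − (1−δ_{ij})·σ₂(η)^{−1}, and let κ₁ ≥ κ₂ ≥ ⋯ ≥ κₙ be the eigenvalues of A(η) in decreasing order. Then (i) σ₂(η)^{−2}·∑_{i=1}^{n} σ₁(η|i)² − (n−1)·σ₂(η)^{−1} ≤ κ₁ ≤ σ₂(η)^{−2}·∑_{i=1}^{n} σ₁(η|i)² + σ₂(η)^{−1}, and (ii) κᵢ ≤ σ₂(η)^{−1} for every i ≥ 2. -/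
open Finset

/-
Writing `c = σ₂⁻¹` and `v i = σ₁(η|i)`, the matrix is `A = w wᵀ + c (1 - J)` with `w = c v` and `J`
the all-ones matrix. Since `0 ≤ J ≤ n`, this gives `w wᵀ - (n - 1) c ≤ A ≤ w wᵀ + c` in the Loewner
order. As `w wᵀ ≤ r` exactly when `‖w‖² ≤ r`, both bounds on the largest eigenvalue follow from the
fact that it is the least `r` with `A ≤ r`. Finally `A ≤ c` as a quadratic form on the hyperplane
`w^⊥`, which meets the span of any two orthogonal eigenvectors, so at most one eigenvalue is `> c`.
-/

open Matrix
open scoped ComplexOrder MatrixOrder InnerProductSpace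

section Eigenvectors

variable {𝕜 E : Type*} [RCLike 𝕜] [NormedAddCommGroup E] [InnerProductSpace 𝕜 E]

theorem re_inner_apply_smul_add_smul_of_eigenvectors {T : E →ₗ[𝕜] E} {u v : E} {a b : ℝ}
    (hu : ‖u‖ = 1) (hv : ‖v‖ = 1) (huv : ⟪u, v⟫_𝕜 = 0)
    (hTu : T u = (a : 𝕜) • u) (hTv : T v = (b : 𝕜) • v) (s t : 𝕜) :
    RCLike.re ⟪s • u + t • v, T (s • u + t • v)⟫_𝕜 = a * ‖s‖ ^ 2 + b * ‖t‖ ^ 2 := by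
  have hvu : ⟪v, u⟫_𝕜 = 0 := inner_eq_zero_symm.mp huv
  have hinner : ⟪s • u + t • v, T (s • u + t • v)⟫_𝕜 =
      ((a * ‖s‖ ^ 2 + b * ‖t‖ ^ 2 : ℝ) : 𝕜) := by
    simp only [map_add, map_smul, hTu, hTv, inner_add_left, inner_add_right, inner_smul_left,
      inner_smul_right, huv, hvu, inner_self_eq_norm_sq_to_K, hu, hv]
    push_cast
    linear_combination (a : 𝕜) * RCLike.conj_mul s + (b : 𝕜) * RCLike.conj_mul t
  rw [hinner, RCLike.ofReal_re]

theorem min_le_of_re_inner_apply_le_on_orthogonal {T : E →ₗ[𝕜] E} {u v w : E} {a b M : ℝ}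
    (hu : ‖u‖ = 1) (hv : ‖v‖ = 1) (huv : ⟪u, v⟫_𝕜 = 0)
    (hTu : T u = (a : 𝕜) • u) (hTv : T v = (b : 𝕜) • v)
    (hM : ∀ x, ⟪w, x⟫_𝕜 = 0 → RCLike.re ⟪x, T x⟫_𝕜 ≤ M * ‖x‖ ^ 2) :
    min a b ≤ M := by
  obtain ⟨s, t, horth, hpos⟩ :
      ∃ s t : 𝕜, ⟪w, s • u + t • v⟫_𝕜 = 0 ∧ 0 < ‖s‖ ^ 2 + ‖t‖ ^ 2 := by
    simp only [inner_add_right, inner_smul_right]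
    by_cases hwu : ⟪w, u⟫_𝕜 = 0
    · exact ⟨1, 0, by simp [hwu], by simp⟩
    · exact ⟨⟪w, v⟫_𝕜, -⟪w, u⟫_𝕜, by ring, by rw [norm_neg]; positivity⟩
  have hnorm : ‖s • u + t • v‖ ^ 2 = ‖s‖ ^ 2 + ‖t‖ ^ 2 := by
    rw [norm_add_sq (𝕜 := 𝕜)]
    simp [norm_smul, inner_smul_left, inner_smul_right, hu, hv, huv]
  refine le_of_mul_le_mul_right ?_ hpos
  calc min a b * (‖s‖ ^ 2 + ‖t‖ ^ 2)
    _ ≤ a * ‖s‖ ^ 2 + b * ‖t‖ ^ 2 := by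
        rw [mul_add]
        gcongr
        · exact min_le_left a b
        · exact min_le_right a b
    _ = RCLike.re ⟪s • u + t • v, T (s • u + t • v)⟫_𝕜 :=
        (re_inner_apply_smul_add_smul_of_eigenvectors hu hv huv hTu hTv s t).symm
    _ ≤ M * (‖s‖ ^ 2 + ‖t‖ ^ 2) := hnorm ▸ hM _ horth

end Eigenvectors

section QuadraticForms

variable {𝕜 ι : Type*} [RCLike 𝕜] [Fintype ι]

theorem star_dotProduct_self_eq_sum_norm_sq (x : ι → 𝕜) :
    star x ⬝ᵥ x = ((∑ i, ‖x i‖ ^ 2 : ℝ) : 𝕜) := by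
  simp [dotProduct, RCLike.conj_mul]

theorem norm_star_dotProduct_sq_le (w x : ι → 𝕜) :
    ‖star w ⬝ᵥ x‖ ^ 2 ≤ (∑ i, ‖w i‖ ^ 2) * ∑ i, ‖x i‖ ^ 2 := by
  have h := norm_inner_le_norm (𝕜 := 𝕜) (WithLp.toLp 2 w) (WithLp.toLp 2 x)
  rw [EuclideanSpace.inner_toLp_toLp, dotProduct_comm] at h
  simpa only [mul_pow, EuclideanSpace.norm_sq_eq] using pow_le_pow_left₀ (norm_nonneg _) h 2

theorem star_dotProduct_vecMulVec_star_mulVec (w x : ι → 𝕜) :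
    star x ⬝ᵥ vecMulVec w (star w) *ᵥ x = ((‖star w ⬝ᵥ x‖ ^ 2 : ℝ) : 𝕜) := by
  have h : star x ⬝ᵥ w = star (star w ⬝ᵥ x) := star_dotProduct x w
  simp [vecMulVec_mulVec, h, RCLike.mul_conj]

variable [DecidableEq ι]

theorem star_dotProduct_algebraMap_mulVec (r : ℝ) (x : ι → 𝕜) :
    star x ⬝ᵥ algebraMap ℝ (Matrix ι ι 𝕜) r *ᵥ x = ((r * ∑ i, ‖x i‖ ^ 2 : ℝ) : 𝕜) := by
  rw [Algebra.algebraMap_eq_smul_one, smul_mulVec, one_mulVec, dotProduct_smul,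
    star_dotProduct_self_eq_sum_norm_sq, RCLike.real_smul_eq_coe_mul, RCLike.ofReal_mul]

end QuadraticForms

section LoewnerOrder

variable {𝕜 ι : Type*} [RCLike 𝕜] [Fintype ι] [DecidableEq ι]
  {A : Matrix ι ι 𝕜} {w : ι → 𝕜} {m M r : ℝ}

theorem vecMulVec_star_le_algebraMap_iff_forall :
    vecMulVec w (star w) ≤ algebraMap ℝ (Matrix ι ι 𝕜) r ↔
      ∀ x, ‖star w ⬝ᵥ x‖ ^ 2 ≤ r * ∑ i, ‖x i‖ ^ 2 := by
  have hherm : (algebraMap ℝ (Matrix ι ι 𝕜) r - vecMulVec w (star w)).IsHermitian :=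
    ((IsSelfAdjoint.all r).algebraMap _).sub (posSemidef_vecMulVec_self_star w).isHermitian
  rw [Matrix.le_iff, posSemidef_iff_dotProduct_mulVec, and_iff_right hherm]
  simp only [sub_mulVec, dotProduct_sub, star_dotProduct_algebraMap_mulVec,
    star_dotProduct_vecMulVec_star_mulVec, ← RCLike.ofReal_sub, RCLike.ofReal_nonneg, sub_nonneg]

theorem vecMulVec_star_le_algebraMap (h : ∑ i, ‖w i‖ ^ 2 ≤ r) :
    vecMulVec w (star w) ≤ algebraMap ℝ (Matrix ι ι 𝕜) r :=
  vecMulVec_star_le_algebraMap_iff_forall.mpr fun x ↦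
    (norm_star_dotProduct_sq_le w x).trans (by gcongr)

theorem sum_norm_sq_le_of_vecMulVec_star_le_algebraMap [Nonempty ι]
    (h : vecMulVec w (star w) ≤ algebraMap ℝ (Matrix ι ι 𝕜) r) : ∑ i, ‖w i‖ ^ 2 ≤ r := by
  rw [vecMulVec_star_le_algebraMap_iff_forall] at h
  rcases (Finset.sum_nonneg fun i _ ↦ sq_nonneg ‖w i‖).eq_or_lt with hw | hw
  · have hone := (sq_nonneg _).trans (h 1)
    rw [← hw]
    exact nonneg_of_mul_nonneg_left hone (by simp [Fintype.card_pos])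
  · have hself := h w
    rw [star_dotProduct_self_eq_sum_norm_sq, RCLike.norm_ofReal, sq_abs, sq] at hself
    exact le_of_mul_le_mul_right hself hw

theorem le_algebraMap_iff_eigenvalues_le (hA : A.IsHermitian) :
    A ≤ algebraMap ℝ (Matrix ι ι 𝕜) r ↔ ∀ i, hA.eigenvalues i ≤ r := by
  rw [le_algebraMap_iff_spectrum_le hA.isSelfAdjoint, hA.spectrum_real_eq_range_eigenvalues,
    Set.forall_mem_range]

theorem re_star_dotProduct_mulVec_le_of_le_vecMulVec_star_add
    (h : A ≤ vecMulVec w (star w) + algebraMap ℝ _ M) (x : ι → 𝕜) :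
    RCLike.re (star x ⬝ᵥ A *ᵥ x) ≤ ‖star w ⬝ᵥ x‖ ^ 2 + M * ∑ i, ‖x i‖ ^ 2 := by
  simpa only [sub_mulVec, add_mulVec, dotProduct_sub, dotProduct_add,
    star_dotProduct_algebraMap_mulVec, star_dotProduct_vecMulVec_star_mulVec, map_sub, map_add,
    RCLike.ofReal_re, sub_nonneg] using (Matrix.le_iff.mp h).re_dotProduct_nonneg x

theorem eigenvalues_le_of_le_vecMulVec_star_add (hA : A.IsHermitian)
    (h : A ≤ vecMulVec w (star w) + algebraMap ℝ _ M) (i : ι) :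
    hA.eigenvalues i ≤ ∑ j, ‖w j‖ ^ 2 + M := by
  refine (le_algebraMap_iff_eigenvalues_le hA).mp (h.trans ?_) i
  rw [map_add]
  gcongr
  exact vecMulVec_star_le_algebraMap le_rfl

theorem le_eigenvalues_of_vecMulVec_star_add_le (hA : A.IsHermitian)
    (h : vecMulVec w (star w) + algebraMap ℝ _ m ≤ A) {i : ι}
    (hmax : ∀ j, hA.eigenvalues j ≤ hA.eigenvalues i) :
    ∑ j, ‖w j‖ ^ 2 + m ≤ hA.eigenvalues i := by
  have : Nonempty ι := ⟨i⟩
  have hle := h.trans ((le_algebraMap_iff_eigenvalues_le hA).mpr hmax)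
  rw [← le_sub_iff_add_le, ← map_sub] at hle
  exact le_sub_iff_add_le.mp (sum_norm_sq_le_of_vecMulVec_star_le_algebraMap hle)

theorem min_eigenvalues_le_of_le_vecMulVec_star_add (hA : A.IsHermitian)
    (h : A ≤ vecMulVec w (star w) + algebraMap ℝ _ M) {i j : ι} (hij : i ≠ j) :
    min (hA.eigenvalues i) (hA.eigenvalues j) ≤ M := by
  have heig (k : ι) : A.toEuclideanLin (hA.eigenvectorBasis k) =
      (hA.eigenvalues k : 𝕜) • hA.eigenvectorBasis k := by
    rw [toLpLin_apply, hA.mulVec_eigenvectorBasis, RCLike.real_smul_eq_coe_smul (K := 𝕜)]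
    rfl
  have horthonormal := hA.eigenvectorBasis.orthonormal
  refine min_le_of_re_inner_apply_le_on_orthogonal (w := WithLp.toLp 2 w)
    (horthonormal.norm_eq_one i) (horthonormal.norm_eq_one j) (horthonormal.inner_eq_zero hij)
    (heig i) (heig j) fun x hx ↦ ?_
  have hform := re_star_dotProduct_mulVec_le_of_le_vecMulVec_star_add h x.ofLp
  rw [EuclideanSpace.inner_eq_star_dotProduct, dotProduct_comm] at hx ⊢
  rw [EuclideanSpace.norm_sq_eq]
  simpa [hx] using hform

end LoewnerOrder

section AllOnesMatrix

variable {𝕜 ι : Type*} [RCLike 𝕜] [Fintype ι] [DecidableEq ι]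

theorem of_mul_star_sub_ite_eq (c : ℝ) (v : ι → 𝕜) :
    (Matrix.of fun i j ↦ (c : 𝕜) ^ 2 * (v i * star (v j)) - if i = j then 0 else (c : 𝕜)) =
      vecMulVec (c • v) (star (c • v)) + (algebraMap ℝ _ c - c • vecMulVec 1 (star 1)) := by
  ext i j
  simp only [of_apply, Matrix.add_apply, Matrix.sub_apply, Matrix.smul_apply, vecMulVec_apply,
    algebraMap_matrix_apply, RCLike.algebraMap_eq_ofReal, star_smul, star_trivial, star_one,
    Pi.smul_apply, Pi.star_apply, Pi.one_apply, RCLike.real_smul_eq_coe_mul]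
  split_ifs <;> ring

variable {c : ℝ}

theorem algebraMap_sub_smul_vecMulVec_one_le (hc : 0 ≤ c) :
    algebraMap ℝ (Matrix ι ι 𝕜) c - c • vecMulVec 1 (star 1) ≤ algebraMap ℝ _ c :=
  sub_le_self _ (smul_nonneg hc (posSemidef_vecMulVec_self_star 1).nonneg)

theorem le_algebraMap_sub_smul_vecMulVec_one (hc : 0 ≤ c) :
    algebraMap ℝ (Matrix ι ι 𝕜) (-((Fintype.card ι - 1) * c)) ≤
      algebraMap ℝ _ c - c • vecMulVec 1 (star 1) := by
  have hones : vecMulVec 1 (star 1) ≤ algebraMap ℝ (Matrix ι ι 𝕜) (Fintype.card ι) :=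
    vecMulVec_star_le_algebraMap (by simp)
  calc algebraMap ℝ (Matrix ι ι 𝕜) (-((Fintype.card ι - 1) * c))
    _ = algebraMap ℝ _ c - c • algebraMap ℝ _ (Fintype.card ι : ℝ) := by
        rw [← algebraMap.coe_smul, ← map_sub, smul_eq_mul]
        ring_nf
    _ ≤ algebraMap ℝ _ c - c • vecMulVec 1 (star 1) := by gcongr

end AllOnesMatrix

theorem stmt11_general {𝕜 ι : Type*} [RCLike 𝕜] [Fintype ι] [DecidableEq ι] {c : ℝ} (hc : 0 ≤ c)
    (v : ι → 𝕜) {A : Matrix ι ι 𝕜}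
    (hA : A = Matrix.of fun i j : ι =>
        (c : 𝕜) ^ 2 * (v i * star (v j)) - (if i = j then 0 else (c : 𝕜)))
    (hherm : A.IsHermitian) {κ : ι → ℝ} (e : Equiv.Perm ι)
    (hκ : ∀ i, κ i = hherm.eigenvalues (e i)) {i₀ : ι} (hmax : ∀ i, κ i ≤ κ i₀) :
    (c ^ 2 * (∑ i, ‖v i‖ ^ 2) - ((Fintype.card ι : ℝ) - 1) * c ≤ κ i₀ ∧
      κ i₀ ≤ c ^ 2 * (∑ i, ‖v i‖ ^ 2) + c) ∧
    ∀ i ≠ i₀, κ i ≤ c := by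
  have hnorm : ∑ i, ‖(c • v) i‖ ^ 2 = c ^ 2 * ∑ i, ‖v i‖ ^ 2 := by
    simp [norm_smul, mul_pow, Finset.mul_sum]
  have hupper : A ≤ vecMulVec (c • v) (star (c • v)) + algebraMap ℝ _ c := by
    rw [hA, of_mul_star_sub_ite_eq]
    gcongr
    exact algebraMap_sub_smul_vecMulVec_one_le hc
  have hlower : vecMulVec (c • v) (star (c • v)) +
      algebraMap ℝ _ (-((Fintype.card ι - 1) * c)) ≤ A := by
    rw [hA, of_mul_star_sub_ite_eq]
    gcongr
    exact le_algebraMap_sub_smul_vecMulVec_one hc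
  have htop (j : ι) : hherm.eigenvalues j ≤ hherm.eigenvalues (e i₀) := by
    simpa only [hκ, e.apply_symm_apply] using hmax (e.symm j)
  rw [← hnorm, sub_eq_add_neg, hκ i₀]
  refine ⟨⟨le_eigenvalues_of_vecMulVec_star_add_le hherm hlower htop,
    eigenvalues_le_of_le_vecMulVec_star_add hherm hupper (e i₀)⟩, fun i hi ↦ ?_⟩
  rw [hκ i, ← min_eq_left (htop (e i))]
  exact min_eigenvalues_le_of_le_vecMulVec_star_add hherm hupper (e.injective.ne hi)

theorem stmt11 (n : ℕ) (hn : 2 ≤ n) (η : Fin n → ℝ) (hη : Gamma2 n η)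
    (A : Matrix (Fin n) (Fin n) ℝ)
    (hA : A = Matrix.of fun i j : Fin n =>
        (sigmaE n 2 η)⁻¹ ^ 2 * (sigma1rest n η i * sigma1rest n η j) -
          (if i = j then 0 else (sigmaE n 2 η)⁻¹))
    (hherm : A.IsHermitian)
    (κ : Fin n → ℝ) (hdec : ∀ i j : Fin n, i ≤ j → κ j ≤ κ i)
    (e : Equiv.Perm (Fin n)) (hκ : ∀ i, κ i = hherm.eigenvalues (e i)) :
    ((sigmaE n 2 η)⁻¹ ^ 2 * (∑ i, (sigma1rest n η i) ^ 2)
          - ((n : ℝ) - 1) * (sigmaE n 2 η)⁻¹ ≤ κ ⟨0, by omega⟩ ∧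
      κ ⟨0, by omega⟩ ≤
        (sigmaE n 2 η)⁻¹ ^ 2 * (∑ i, (sigma1rest n η i) ^ 2) + (sigmaE n 2 η)⁻¹) ∧
    ∀ i : Fin n, 1 ≤ (i : ℕ) → κ i ≤ (sigmaE n 2 η)⁻¹ := by
  simpa only [Real.norm_eq_abs, sq_abs, Fintype.card_fin, ne_eq, Fin.ext_iff,
    Nat.one_le_iff_ne_zero] using
    stmt11_general (inv_nonneg.mpr hη.2.le) (sigma1rest n η) (by simpa using hA) hherm e hκ
      fun i ↦ hdec ⟨0, by omega⟩ i (Nat.zero_le i)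
end
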